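/- arXiv:1904.01800 — 2 statements merged into one kernel-verified Lean document; each statement's English description precedes it below -/
import Mathlib

section
/- Let Γ be a finite connected simple graph with r+1 vertices, where r+1 ≥ 3, and with n edges, where n ≥ 3, and let F_Γ be its Kirchhoff polynomial. Then for every point a ∈ (ℝ_{>0})^n, the Hessian matrix H_{F_Γ} evaluated at a is nonsingular and has exactly n−1 negative eigenvalues and exactly one positive eigenvalue; in particular (−1)^{n−1}·det(H_{F_Γ})(a) > 0. -/
/-!
Fix a root `v₀` and let `B` be the oriented edge-vertex incidence matrix with the column of `v₀`
removed. For weights `x` put `L x = Bᵀ * diagonal x * B`, the reduced weighted Laplacian. By the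
matrix-tree theorem (`eval_kirchhoff`) the Kirchhoff polynomial takes the value `det (L x)` at `x`.

Write `L = L a` and `K = B * L⁻¹ * Bᵀ`. Every monomial of the Kirchhoff polynomial is squarefree, so
its second partial derivatives are second differences with unit steps, and the matrix determinant
lemma gives `H i j = det L * (K i i * K j j - K i j ^ 2)` (`hessian_entry`). Hence, with `N = L v`,
the Hessian form is
`v ⬝ᵥ H *ᵥ v = det L * ((trace (L⁻¹ * N)) ^ 2 - trace ((L⁻¹ * N) ^ 2))`.

On the hyperplane `trace (L⁻¹ * N) = 0` the form is negative definite: `L` is positive definite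
because the graph is connected, so `trace ((L⁻¹ * N) ^ 2)` is the squared Frobenius norm of a
symmetric matrix congruent to `N` (`trace_sq_pos`), and `N = 0` forces `v = 0` since the graph is
simple (`lap_injective`). At `v = a` we have `N = L`, and the form takes the value
`det L * (r ^ 2 - r) > 0`. These two facts determine the signature (`signature_of_form`).

The matrix-tree theorem follows from the Cauchy-Binet expansion (`cauchy_binet`): the square minor of
`B` on a set `T` of `r` edges vanishes when `T` is not connected (an indicator function is in the
kernel), and otherwise it is a unit, since its kernel is trivial over `ZMod p` for every prime `p`.
-/

open MvPolynomial

/-- A spanning tree of a graph `G`, given as a set `T` of edges of `G` with `|V| - 1` edges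
whose spanning subgraph is connected. -/
def IsSpanningTree {V : Type} [Fintype V] [DecidableEq V] (G : SimpleGraph V)
    (T : Finset G.edgeSet) : Prop :=
  T.card = Fintype.card V - 1 ∧
    (SimpleGraph.fromEdgeSet (Subtype.val '' (T : Set G.edgeSet))).Connected

open scoped Classical in
/-- The Kirchhoff polynomial of a graph. -/
noncomputable def kirchhoff {V : Type} [Fintype V] [DecidableEq V] (G : SimpleGraph V)
    [Fintype G.edgeSet] : MvPolynomial G.edgeSet ℝ :=
  ∑ T : Finset G.edgeSet, if IsSpanningTree G T then ∏ e ∈ T, X e else 0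

/-! ### Second derivatives of squarefree monomials -/

theorem pderiv_prod_X {E : Type*} [DecidableEq E] (T : Finset E) (j : E) :
    pderiv j (∏ e ∈ T, X e : MvPolynomial E ℝ) =
      if j ∈ T then ∏ e ∈ T.erase j, X e else 0 := by
  induction T using Finset.induction_on with
  | empty => simp
  | insert b T hb ih =>
    rw [Finset.prod_insert hb, pderiv_mul, ih]
    by_cases hjb : j = b
    · subst hjb
      simp [hb]
    · rw [pderiv_X_of_ne (Ne.symm hjb)]
      by_cases hjT : j ∈ T
      · simp [hjT, Finset.erase_insert_of_ne (Ne.symm hjb), Finset.prod_insert, hb]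
      · simp [hjT, hjb]

/-- A squarefree monomial is affine in each variable, so its partial derivative is a unit-step
difference. -/
theorem eval_pderiv_prod_X {E : Type*} [DecidableEq E] (T : Finset E) (j : E) (a : E → ℝ) :
    eval a (pderiv j (∏ e ∈ T, X e : MvPolynomial E ℝ)) =
      eval (a + Pi.single j 1) (∏ e ∈ T, X e) - eval a (∏ e ∈ T, X e) := by
  rw [pderiv_prod_X]
  have hne : ∀ S : Finset E, j ∉ S → ∏ e ∈ S, (a + Pi.single j 1 : E → ℝ) e = ∏ e ∈ S, a e :=
    fun S hS => Finset.prod_congr rfl fun e he => by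
      have : e ≠ j := fun h => hS (h ▸ he)
      simp [this]
  by_cases hj : j ∈ T
  · simp only [hj, if_true, map_prod, eval_X]
    rw [← Finset.mul_prod_erase T a hj, ← Finset.mul_prod_erase T _ hj,
      hne _ (Finset.notMem_erase j T)]
    simp; ring
  · simp only [hj, if_false, map_prod, eval_X, hne T hj]; simp

theorem eval_pderiv_pderiv_prod_X {E : Type*} [DecidableEq E] (T : Finset E) (i j : E)
    (a : E → ℝ) :
    eval a (pderiv i (pderiv j (∏ e ∈ T, X e : MvPolynomial E ℝ))) = if i = j then 0 else
      eval (a + Pi.single i 1 + Pi.single j 1) (∏ e ∈ T, X e)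
        - eval (a + Pi.single i 1) (∏ e ∈ T, X e)
        - eval (a + Pi.single j 1) (∏ e ∈ T, X e) + eval a (∏ e ∈ T, X e) := by
  by_cases hij : i = j
  · subst hij
    rw [pderiv_prod_X, if_pos rfl]
    split_ifs with h
    · rw [pderiv_prod_X]; simp
    · simp
  · have h1 : eval a (pderiv i (pderiv j (∏ e ∈ T, X e : MvPolynomial E ℝ))) =
        eval (a + Pi.single i 1) (pderiv j (∏ e ∈ T, X e : MvPolynomial E ℝ)) -
          eval a (pderiv j (∏ e ∈ T, X e : MvPolynomial E ℝ)) := by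
      rw [pderiv_prod_X T j]
      split_ifs
      · exact eval_pderiv_prod_X _ _ _
      · simp
    rw [h1, eval_pderiv_prod_X, eval_pderiv_prod_X, if_neg hij]; ring

/-! ### The Cauchy-Binet expansion -/

open Matrix in
/-- The part of the row expansion of `det (Bᵀ * diagonal x * B)` with a given set of chosen rows:
the choices `p` with the same image as `g` are `g ∘ σ` for the permutations `σ`, and they add up to
a squared minor. -/
theorem cauchy_binet_fiber {E W R : Type*} [DecidableEq E] [Fintype E]
    [Fintype W] [DecidableEq W] [CommRing R] (B : Matrix E W R) (x : E → R) (g : W → E)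
    (hg : Function.Injective g) :
    ∑ p : W → E with Finset.univ.image p = Finset.univ.image g,
        (∏ i, x (p i) * B (p i) i) * (B.submatrix p id).det =
      (∏ e ∈ Finset.univ.image g, x e) * (B.submatrix g id).det ^ 2 := by
  have hbij : ∑ p : W → E with Finset.univ.image p = Finset.univ.image g,
        (∏ i, x (p i) * B (p i) i) * (B.submatrix p id).det =
      ∑ σ : Equiv.Perm W, (∏ i, x (g (σ i)) * B (g (σ i)) i) *
        (B.submatrix (g ∘ σ) id).det := by
    symm
    refine Finset.sum_bij (fun σ _ => g ∘ σ) ?_ ?_ ?_ ?_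
    · intro σ _
      simp only [Finset.mem_filter, Finset.mem_univ, true_and]
      rw [← Finset.image_image]
      congr 1
      simp
    · intro σ _ τ _ h
      ext i
      exact hg (congrFun h i)
    · intro p hp
      simp only [Finset.mem_filter, Finset.mem_univ, true_and] at hp
      have hmem : ∀ i, ∃ j, g j = p i := fun i => by
        have : p i ∈ Finset.univ.image g := hp ▸ Finset.mem_image_of_mem _ (Finset.mem_univ i)
        simpa using this
      choose s hs using hmem
      have hsurj : Function.Surjective s := fun j => by
        have : g j ∈ Finset.univ.image p := hp ▸ Finset.mem_image_of_mem _ (Finset.mem_univ j)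
        obtain ⟨i, -, hi⟩ := Finset.mem_image.1 this
        exact ⟨i, hg (by rw [hs, hi])⟩
      exact ⟨Equiv.ofBijective s (Finite.surjective_iff_bijective.1 hsurj), Finset.mem_univ _,
        funext hs⟩
    · intro σ _; rfl
  rw [hbij, Finset.prod_image (fun a _ b _ h => hg h), sq]
  have hdet : (B.submatrix g id).det =
      ∑ σ : Equiv.Perm W, (Equiv.Perm.sign σ : R) * ∏ i, B (g (σ i)) i := by
    rw [Matrix.det_apply']; rfl
  nth_rewrite 2 [hdet]
  rw [Finset.mul_sum, Finset.mul_sum]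
  refine Finset.sum_congr rfl fun σ _ => ?_
  have h1 : (B.submatrix (g ∘ σ) id).det =
      (Equiv.Perm.sign σ : R) * (B.submatrix g id).det :=
    Matrix.det_permute σ (B.submatrix g id)
  rw [h1, Finset.prod_mul_distrib, Equiv.prod_comp σ (fun i => x (g i))]
  ring

open Matrix in
/-- Cauchy-Binet for `Bᵀ * diagonal x * B`. The squared minors are passed as a function `c` of the row
set, which avoids choosing an enumeration of each set; `c` vanishes on sets of the wrong size. -/
theorem cauchy_binet {E W R : Type*} [DecidableEq E] [Fintype E]
    [Fintype W] [DecidableEq W] [CommRing R] (B : Matrix E W R) (x : E → R) (c : Finset E → R)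
    (hc : ∀ g : W → E, Function.Injective g →
      (B.submatrix g id).det ^ 2 = c (Finset.univ.image g))
    (hc0 : ∀ T : Finset E, T.card ≠ Fintype.card W → c T = 0) :
    (Bᵀ * diagonal x * B).det = ∑ T : Finset E, c T * ∏ e ∈ T, x e := by
  have h0 : (Bᵀ * diagonal x * B).det = ∑ p : W → E,
      (∏ i, x (p i) * B (p i) i) * (B.submatrix p id).det := by
    have h1 : Bᵀ * diagonal x * B = Matrix.of fun i => ∑ e, (x e * B e i) • B e := by
      ext i j
      rw [mul_apply, Matrix.of_apply, Finset.sum_apply]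
      simp only [mul_diagonal, transpose_apply, Pi.smul_apply, smul_eq_mul]
      exact Finset.sum_congr rfl fun e _ => by ring
    rw [h1]
    refine ((detRowAlternating (R := R) (n := W)).toMultilinearMap.map_sum
      (fun i e => (x e * B e i) • B e)).trans ?_
    refine Finset.sum_congr rfl fun p _ => ?_
    exact (detRowAlternating (R := R) (n := W)).toMultilinearMap.map_smul_univ
      (fun i => x (p i) * B (p i) i) (fun i => B (p i))
  rw [h0, ← Finset.sum_fiberwise (s := Finset.univ) (g := fun p : W → E => Finset.univ.image p)]
  refine Finset.sum_congr rfl fun T _ => ?_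
  by_cases hT : T.card = Fintype.card W
  · have e : W ≃ T := Fintype.equivOfCardEq (by simp [hT])
    have hinj : Function.Injective (fun w => (e w : E)) :=
      Subtype.val_injective.comp e.injective
    have himg : Finset.univ.image (fun w => (e w : E)) = T := by
      ext t
      simp only [Finset.mem_image, Finset.mem_univ, true_and]
      exact ⟨fun ⟨w, hw⟩ => hw ▸ (e w).2, fun ht => ⟨e.symm ⟨t, ht⟩, by simp⟩⟩
    have := cauchy_binet_fiber B x _ hinj
    rw [hc _ hinj, himg] at this
    rw [this, mul_comm]
  · rw [hc0 T hT, zero_mul]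
    refine Finset.sum_eq_zero fun p hp => ?_
    simp only [Finset.mem_filter, Finset.mem_univ, true_and] at hp
    have : ¬ Function.Injective p := fun h => hT (by
      rw [← hp, Finset.card_image_of_injective _ h, Finset.card_univ])
    simp only [Function.Injective, not_forall] at this
    obtain ⟨i, j, hij, hne⟩ := this
    rw [det_zero_of_row_eq hne (by ext; simp [hij]), mul_zero]

/-! ### Second differences of the Laplacian determinant -/

open Matrix in
/-- The second difference of `x ↦ det (Bᵀ * diagonal x * B)` in the directions `i` and `j`, from the
matrix determinant lemma for rank-two and rank-one updates. -/
theorem det_diff {E W : Type*} [DecidableEq E] [Fintype E]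
    [Fintype W] [DecidableEq W] (B : Matrix E W ℝ) (a : E → ℝ)
    (K : Matrix E E ℝ) (hK : K = B * (Bᵀ * diagonal a * B)⁻¹ * Bᵀ)
    (hsym : ∀ i j, K j i = K i j)
    (hu : IsUnit (Bᵀ * diagonal a * B).det) (i j : E) :
    (Bᵀ * diagonal (a + Pi.single i 1 + Pi.single j 1) * B).det
      - (Bᵀ * diagonal (a + Pi.single i 1) * B).det
      - (Bᵀ * diagonal (a + Pi.single j 1) * B).det + (Bᵀ * diagonal a * B).det =
    (Bᵀ * diagonal a * B).det * (K i i * K j j - K i j ^ 2) := by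
  have hgen : ∀ (m : ℕ) (s : Fin m → E),
      (Bᵀ * diagonal (a + ∑ k, Pi.single (s k) 1) * B).det =
        (Bᵀ * diagonal a * B).det * (1 + K.submatrix s s).det := by
    intro m s
    have h1 : Bᵀ * diagonal (a + ∑ k, Pi.single (s k) 1) * B =
        Bᵀ * diagonal a * B + (B.submatrix s id)ᵀ * B.submatrix s id := by
      have : diagonal (a + ∑ k, Pi.single (s k) (1 : ℝ)) =
          diagonal a + diagonal (∑ k, Pi.single (s k) (1 : ℝ)) := by simp
      rw [this, Matrix.mul_add, Matrix.add_mul]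
      congr 1
      ext p q
      rw [mul_apply, mul_apply]
      simp only [mul_diagonal, transpose_apply, submatrix_apply, id, Finset.sum_apply,
        Finset.mul_sum, Finset.sum_mul]
      rw [Finset.sum_comm]
      refine Finset.sum_congr rfl fun k _ => ?_
      rw [Finset.sum_eq_single (s k)] <;> simp +contextual
    rw [h1, det_add_mul _ _ hu]
    congr 3
    rw [hK]
    ext p q
    simp only [mul_apply, transpose_apply, submatrix_apply, id]
  have h2 := hgen 2 ![i, j]
  have hi := hgen 1 ![i]
  have hj := hgen 1 ![j]
  rw [det_fin_two] at h2
  rw [det_fin_one] at hi hj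
  simp only [Fin.sum_univ_two, Fin.sum_univ_one, Matrix.add_apply, submatrix_apply, cons_val_zero,
    cons_val_one, one_apply_eq, ← add_assoc, ne_eq, zero_ne_one, one_ne_zero, not_false_eq_true,
    one_apply_ne] at h2 hi hj
  rw [h2, hi, hj, hsym i j]
  ring

/-! ### The reduced incidence matrix and the matrix-tree theorem -/

/-- The reduced oriented incidence matrix over `R`: rows are edges, columns are the vertices other than
the root `v₀`. The edge `e` is oriented by the representative pair `Quot.out e`, with entry `1` at the
first endpoint and `-1` at the second. -/
noncomputable def redInc {V : Type} [DecidableEq V] (G : SimpleGraph V) (v₀ : V) (R : Type) [Ring R] :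
    Matrix G.edgeSet {v : V // v ≠ v₀} R :=
  Matrix.of fun e w => (if w.1 = (Quot.out e.1).1 then 1 else 0) -
    (if w.1 = (Quot.out e.1).2 then 1 else 0)

theorem edge_out {V : Type} (e : Sym2 V) : s((Quot.out e).1, (Quot.out e).2) = e :=
  Quot.out_eq e

open Matrix in
/-- For a potential `f` vanishing at the root, `redInc` computes the potential differences along the
edges. -/
theorem redInc_mulVec {V : Type} [Fintype V] [DecidableEq V] (G : SimpleGraph V) (v₀ : V)
    (R : Type) [CommRing R] (f : V → R) (hf : f v₀ = 0) (e : G.edgeSet) :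
    (redInc G v₀ R *ᵥ fun w => f w.1) e = f (Quot.out e.1).1 - f (Quot.out e.1).2 := by
  have key : ∀ u : V, ∑ w : {v : V // v ≠ v₀}, (if w.1 = u then (1 : R) else 0) * f w.1 = f u := by
    intro u
    have h1 : ∑ w : {v : V // v ≠ v₀}, (if w.1 = u then (1 : R) else 0) * f w.1 =
        ∑ w : V, (if w = u then (1 : R) else 0) * f w := by
      rw [← Finset.sum_erase (a := v₀) Finset.univ (by simp [hf])]
      symm
      apply Finset.sum_subtype
      simp
    rw [h1]
    simp
  simp only [redInc, mulVec, dotProduct, Matrix.of_apply, sub_mul, Finset.sum_sub_distrib, key]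

theorem eq_zero_of_connected {V : Type} {R : Type} [Zero R] (T : SimpleGraph V)
    (hT : T.Connected) (v₀ : V) (f : V → R) (hf : f v₀ = 0)
    (h : ∀ u v, T.Adj u v → f u = f v) (v : V) : f v = 0 := by
  obtain ⟨p⟩ := hT.preconnected v v₀
  induction p with
  | nil => exact hf
  | cons hadj _ ih => rw [h _ _ hadj, ih hf]

theorem eq_of_adj {V R : Type} (S : Set (Sym2 V)) (f : V → R)
    (h : ∀ e ∈ S, f (Quot.out e).1 = f (Quot.out e).2) (u v : V)
    (huv : (SimpleGraph.fromEdgeSet S).Adj u v) : f u = f v := by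
  rw [SimpleGraph.fromEdgeSet_adj] at huv
  have h1 := h _ huv.1
  have h2 := edge_out s(u, v)
  rw [Sym2.eq_iff] at h2
  rcases h2 with ⟨ha, hb⟩ | ⟨ha, hb⟩
  · rw [ha, hb] at h1; exact h1
  · rw [ha, hb] at h1; exact h1.symm

/-- Extension of a function on the non-root vertices by `0` at the root. -/
def extendZero {V : Type} [DecidableEq V] {R : Type} [Zero R] (v₀ : V) (f : {v : V // v ≠ v₀} → R)
    (v : V) : R := if h : v ≠ v₀ then f ⟨v, h⟩ else 0

theorem extendZero_root {V : Type} [DecidableEq V] {R : Type} [Zero R] (v₀ : V)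
    (f : {v : V // v ≠ v₀} → R) : extendZero v₀ f v₀ = 0 := by simp [extendZero]

theorem extendZero_coe {V : Type} [DecidableEq V] {R : Type} [Zero R] (v₀ : V)
    (f : {v : V // v ≠ v₀} → R) : (fun w : {v : V // v ≠ v₀} => extendZero v₀ f w.1) = f := by
  ext w; simp [extendZero, w.2]

open Matrix in
/-- Over any commutative ring, a potential whose differences vanish along a connected spanning set
of edges is zero. -/
theorem redInc_ker {V : Type} [Fintype V] [DecidableEq V] (G : SimpleGraph V) (v₀ : V)
    (R : Type) [CommRing R] (S : Set G.edgeSet)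
    (hS : (SimpleGraph.fromEdgeSet (Subtype.val '' S)).Connected)
    (f : {v : V // v ≠ v₀} → R) (hf : ∀ e ∈ S, (redInc G v₀ R *ᵥ f) e = 0) : f = 0 := by
  rw [← extendZero_coe v₀ f] at hf ⊢
  ext w
  refine eq_zero_of_connected _ hS v₀ _ (extendZero_root v₀ f) ?_ w.1
  refine eq_of_adj _ _ ?_
  rintro _ ⟨e, he, rfl⟩
  have := hf e he
  rw [redInc_mulVec G v₀ R _ (extendZero_root v₀ f)] at this
  exact sub_eq_zero.1 this

theorem redInc_map {V : Type} [DecidableEq V] (G : SimpleGraph V) (v₀ : V)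
    (R : Type) [Ring R] : (redInc G v₀ ℤ).map (Int.castRingHom R) = redInc G v₀ R := by
  ext e w
  simp only [redInc, Matrix.map_apply, Matrix.of_apply, map_sub]
  split_ifs <;> simp

open Matrix in
/-- The determinant is nonzero modulo every prime, hence is `1` or `-1`. -/
theorem det_redInc_sq_of_connected {V : Type} [Fintype V] [DecidableEq V] (G : SimpleGraph V)
    (v₀ : V) (g : {v : V // v ≠ v₀} → G.edgeSet)
    (hS : (SimpleGraph.fromEdgeSet (Subtype.val '' Set.range g)).Connected) :
    ((redInc G v₀ ℤ).submatrix g id).det ^ 2 = 1 := by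
  have hp : ∀ p : ℕ, p.Prime → ¬ p ∣ ((redInc G v₀ ℤ).submatrix g id).det.natAbs := by
    intro p hp hdvd
    have : Fact p.Prime := ⟨hp⟩
    have h0 : ((redInc G v₀ (ZMod p)).submatrix g id).det = 0 := by
      rw [← redInc_map, submatrix_map]
      have := RingHom.map_det (Int.castRingHom (ZMod p)) ((redInc G v₀ ℤ).submatrix g id)
      rw [RingHom.mapMatrix_apply] at this
      rw [← this, eq_intCast, ZMod.intCast_zmod_eq_zero_iff_dvd]
      exact Int.natCast_dvd.2 hdvd
    obtain ⟨f, hf, hf0⟩ := exists_mulVec_eq_zero_iff.2 h0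
    refine hf (redInc_ker G v₀ (ZMod p) _ hS f ?_)
    rintro _ ⟨w, rfl⟩
    exact congrFun hf0 w
  have h1 : ((redInc G v₀ ℤ).submatrix g id).det.natAbs = 1 := by
    by_contra h
    obtain ⟨p, hpp, hpd⟩ := Nat.exists_prime_and_dvd h
    exact hp p hpp hpd
  rw [← Int.natAbs_sq, h1]; simp

open Matrix in
/-- The indicator function of the vertices not reachable from the root lies in the kernel. -/
theorem det_redInc_of_not_connected {V : Type} [Fintype V] [DecidableEq V] (G : SimpleGraph V)
    (v₀ : V) (g : {v : V // v ≠ v₀} → G.edgeSet)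
    (hS : ¬ (SimpleGraph.fromEdgeSet (Subtype.val '' Set.range g)).Connected) :
    ((redInc G v₀ ℤ).submatrix g id).det = 0 := by
  classical
  set T := SimpleGraph.fromEdgeSet (Subtype.val '' Set.range g) with hT
  obtain ⟨v, hv⟩ : ∃ v, ¬ T.Reachable v₀ v := by
    by_contra! h
    have : Nonempty V := ⟨v₀⟩
    exact hS ⟨fun a b => (h a).symm.trans (h b)⟩
  set f : V → ℤ := fun v => if T.Reachable v₀ v then 0 else 1 with hf
  have hf0 : f v₀ = 0 := by simp [hf]
  refine exists_mulVec_eq_zero_iff.1 ⟨fun w => f w.1, ?_, ?_⟩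
  · intro h
    have hne : v ≠ v₀ := by rintro rfl; exact hv (SimpleGraph.Reachable.refl _)
    have := congrFun h ⟨v, hne⟩
    simp [hf, hv] at this
  · ext w
    change (redInc G v₀ ℤ *ᵥ fun w => f w.1) (g w) = 0
    rw [redInc_mulVec G v₀ ℤ f hf0, sub_eq_zero]
    have hadj : T.Adj (Quot.out (g w).1).1 (Quot.out (g w).1).2 := by
      rw [hT, SimpleGraph.fromEdgeSet_adj, edge_out]
      refine ⟨⟨g w, ⟨w, rfl⟩, rfl⟩, ?_⟩
      have := (g w).2
      rw [← edge_out (g w).1, SimpleGraph.mem_edgeSet] at this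
      exact this.ne
    have : T.Reachable v₀ (Quot.out (g w).1).1 ↔ T.Reachable v₀ (Quot.out (g w).1).2 :=
      ⟨fun h => h.trans hadj.reachable, fun h => h.trans hadj.reachable.symm⟩
    simp only [hf, this]

open Matrix in
/-- The weighted matrix-tree theorem. -/
theorem eval_kirchhoff {V : Type} [Fintype V] [DecidableEq V] (G : SimpleGraph V)
    [Fintype G.edgeSet] (v₀ : V) (x : G.edgeSet → ℝ) :
    eval x (kirchhoff G) = ((redInc G v₀ ℝ)ᵀ * diagonal x * redInc G v₀ ℝ).det := by
  classical
  have hcard : Fintype.card {v : V // v ≠ v₀} = Fintype.card V - 1 := by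
    simp [Fintype.card_subtype_compl]
  rw [cauchy_binet (redInc G v₀ ℝ) x (fun T => if IsSpanningTree G T then 1 else 0)]
  · rw [kirchhoff, map_sum]
    refine Finset.sum_congr rfl fun T _ => ?_
    split_ifs <;> simp
  · intro g hg
    have hcast : ((redInc G v₀ ℝ).submatrix g id).det =
        (((redInc G v₀ ℤ).submatrix g id).det : ℝ) := by
      rw [← redInc_map, submatrix_map]
      exact (RingHom.map_det (Int.castRingHom ℝ) ((redInc G v₀ ℤ).submatrix g id)).symm
    have htree : IsSpanningTree G (Finset.univ.image g) ↔
        (SimpleGraph.fromEdgeSet (Subtype.val '' Set.range g)).Connected := by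
      rw [IsSpanningTree, Finset.card_image_of_injective _ hg, Finset.card_univ, hcard]
      simp
    rw [hcast]
    by_cases hS : (SimpleGraph.fromEdgeSet (Subtype.val '' Set.range g)).Connected
    · rw [if_pos (htree.2 hS)]
      exact_mod_cast det_redInc_sq_of_connected G v₀ g hS
    · rw [if_neg (fun h => hS (htree.1 h)), det_redInc_of_not_connected G v₀ g hS]
      simp
  · intro T hT
    exact if_neg fun h => hT (by rw [hcard, h.1])

open Matrix in
theorem posDef_lap {V : Type} [Fintype V] [DecidableEq V] (G : SimpleGraph V)
    [Fintype G.edgeSet] (hconn : G.Connected) (v₀ : V) (a : G.edgeSet → ℝ) (ha : ∀ e, 0 < a e) :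
    ((redInc G v₀ ℝ)ᵀ * diagonal a * redInc G v₀ ℝ).PosDef := by
  have := (PosDef.diagonal (R := ℝ) ha).conjTranspose_mul_mul_same (B := redInc G v₀ ℝ) (by
    intro f f' hff
    have h0 : redInc G v₀ ℝ *ᵥ (f - f') = 0 := by
      rw [mulVec_sub]; exact sub_eq_zero.2 hff
    refine sub_eq_zero.1 (redInc_ker G v₀ ℝ Set.univ ?_ _ fun e _ => congrFun h0 e)
    simpa using hconn)
  rwa [conjTranspose_eq_transpose_of_trivial] at this

open Matrix in
/-- A simple graph's edge weights are determined by its reduced Laplacian. -/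
theorem lap_injective {V : Type} [Fintype V] [DecidableEq V] (G : SimpleGraph V)
    [Fintype G.edgeSet] (v₀ : V) (x : G.edgeSet → ℝ)
    (hx : (redInc G v₀ ℝ)ᵀ * diagonal x * redInc G v₀ ℝ = 0) : x = 0 := by
  have hform : ∀ f h : V → ℝ, f v₀ = 0 → h v₀ = 0 →
      ∑ e, x e * ((f (Quot.out e.1).1 - f (Quot.out e.1).2) *
        (h (Quot.out e.1).1 - h (Quot.out e.1).2)) = 0 := by
    intro f h hf hh
    have h1 : (fun w : {v : V // v ≠ v₀} => f w.1) ⬝ᵥ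
        (((redInc G v₀ ℝ)ᵀ * diagonal x * redInc G v₀ ℝ) *ᵥ fun w => h w.1) = 0 := by
      rw [hx]; simp
    rw [← mulVec_mulVec, ← mulVec_mulVec, mulVec_transpose, dotProduct_comm, ← dotProduct_mulVec,
      dotProduct] at h1
    rw [← h1]
    refine Finset.sum_congr rfl fun e _ => ?_
    rw [mulVec_diagonal, redInc_mulVec G v₀ ℝ f hf, redInc_mulVec G v₀ ℝ h hh]
    ring
  -- Only differences of `f` and `h` enter, so the normalization at the root can be dropped.
  have hform' : ∀ f h : V → ℝ,
      ∑ e, x e * ((f (Quot.out e.1).1 - f (Quot.out e.1).2) *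
        (h (Quot.out e.1).1 - h (Quot.out e.1).2)) = 0 := by
    intro f h
    simpa using hform (fun v => f v - f v₀) (fun v => h v - h v₀) (by simp) (by simp)
  ext e₀
  have hne : ∀ e : G.edgeSet, (Quot.out e.1).1 ≠ (Quot.out e.1).2 := fun e => by
    have := e.2
    rw [← edge_out e.1, SimpleGraph.mem_edgeSet] at this
    exact this.ne
  -- Testing on the indicators of the two endpoints of `e₀` isolates the term of `e₀`.
  have h1 := hform' (Pi.single (Quot.out e₀.1).1 1) (Pi.single (Quot.out e₀.1).2 1)
  rw [Finset.sum_eq_single e₀] at h1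
  · simpa [hne e₀, (hne e₀).symm] using h1
  · intro e _ hee
    have h2 : s((Quot.out e.1).1, (Quot.out e.1).2) ≠ s((Quot.out e₀.1).1, (Quot.out e₀.1).2) := by
      rw [edge_out, edge_out]
      exact fun h => hee (Subtype.ext h)
    rw [Ne, Sym2.eq_iff] at h2
    have h3 := hne e
    have h4 := hne e₀
    simp only [Pi.single_apply]
    clear hform hform' h1 hne
    split_ifs <;> grind
  · simp

/-! ### The Hessian of the Kirchhoff polynomial -/

open Matrix in
/-- The entries of the Hessian in terms of `K = B * L⁻¹ * Bᵀ`. On the diagonal both sides are zero. -/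
theorem hessian_entry {V : Type} [Fintype V] [DecidableEq V] (G : SimpleGraph V)
    [Fintype G.edgeSet] (v₀ : V) (a : G.edgeSet → ℝ) (K : Matrix G.edgeSet G.edgeSet ℝ)
    (hK : K = redInc G v₀ ℝ * ((redInc G v₀ ℝ)ᵀ * diagonal a * redInc G v₀ ℝ)⁻¹ *
      (redInc G v₀ ℝ)ᵀ)
    (hsym : ∀ i j, K j i = K i j)
    (hu : IsUnit ((redInc G v₀ ℝ)ᵀ * diagonal a * redInc G v₀ ℝ).det) (i j : G.edgeSet) :
    eval a (pderiv i (pderiv j (kirchhoff G))) =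
      ((redInc G v₀ ℝ)ᵀ * diagonal a * redInc G v₀ ℝ).det * (K i i * K j j - K i j ^ 2) := by
  have h : eval a (pderiv i (pderiv j (kirchhoff G))) = if i = j then 0 else
      eval (a + Pi.single i 1 + Pi.single j 1) (kirchhoff G)
        - eval (a + Pi.single i 1) (kirchhoff G)
        - eval (a + Pi.single j 1) (kirchhoff G) + eval a (kirchhoff G) := by
    simp only [kirchhoff, map_sum]
    by_cases hij : i = j
    · rw [if_pos hij]
      refine Finset.sum_eq_zero fun T _ => ?_
      split_ifs
      · rw [eval_pderiv_pderiv_prod_X, if_pos hij]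
      · simp
    · rw [if_neg hij, ← Finset.sum_sub_distrib, ← Finset.sum_sub_distrib,
        ← Finset.sum_add_distrib]
      refine Finset.sum_congr rfl fun T _ => ?_
      split_ifs
      · rw [eval_pderiv_pderiv_prod_X, if_neg hij]
      · simp
  rw [h]
  split_ifs with hij
  · subst hij; ring
  · simp only [eval_kirchhoff G v₀]
    exact det_diff _ a K hK hsym hu i j

/-! ### Signature of the Hessian form -/

open Matrix in
/-- A symmetric form that is negative definite on the hyperplane orthogonal to `l` and positive at
some vector has one positive eigenvalue and all others negative: two eigenvectors with nonnegative
eigenvalues would span a plane meeting the hyperplane nontrivially. -/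
theorem signature_of_form {E : Type*} [Fintype E] [DecidableEq E] (H : Matrix E E ℝ)
    (hH : H.IsHermitian) (l : E → ℝ)
    (hneg : ∀ v : E → ℝ, v ≠ 0 → l ⬝ᵥ v = 0 → v ⬝ᵥ (H *ᵥ v) < 0)
    (a : E → ℝ) (hpos : 0 < a ⬝ᵥ (H *ᵥ a)) :
    ∃ k, 0 < hH.eigenvalues k ∧ ∀ i, i ≠ k → hH.eigenvalues i < 0 := by
  obtain ⟨k, hk⟩ : ∃ k, 0 < hH.eigenvalues k := by
    by_contra! hcon
    have hs : (-H).PosSemidef := by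
      have h1 := hH.spectral_theorem
      have h2 : (diagonal (fun i => -hH.eigenvalues i)).PosSemidef :=
        PosSemidef.diagonal fun i => by simpa using hcon i
      have h3 := h2.mul_mul_conjTranspose_same (hH.eigenvectorUnitary : Matrix E E ℝ)
      convert h3 using 1
      conv_lhs => rw [h1]
      have h4 : diagonal (fun i => -hH.eigenvalues i) = -diagonal hH.eigenvalues := by
        rw [diagonal_neg]
      rw [Unitary.conjStarAlgAut_apply, h4]
      rw [Matrix.mul_neg, Matrix.neg_mul]
      rfl
    have := hs.dotProduct_mulVec_nonneg a
    simp [neg_mulVec] at this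
    linarith
  refine ⟨k, hk, fun i hik => ?_⟩
  by_contra! hi
  set u : E → E → ℝ := fun i => (hH.eigenvectorBasis i).ofLp with hu
  have hmul : ∀ i, H *ᵥ u i = hH.eigenvalues i • u i := fun i => hH.mulVec_eigenvectorBasis i
  have horth : ∀ i j, u i ⬝ᵥ u j = if i = j then 1 else 0 := fun i j => by
    have := orthonormal_iff_ite.1 hH.eigenvectorBasis.orthonormal j i
    rw [EuclideanSpace.inner_eq_star_dotProduct] at this
    simpa [hu, eq_comm] using this
  obtain ⟨c, d, hcd, hl⟩ : ∃ c d : ℝ, (c ≠ 0 ∨ d ≠ 0) ∧ c * (l ⬝ᵥ u i) + d * (l ⬝ᵥ u k) = 0 := by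
    by_cases h : l ⬝ᵥ u i = 0
    · exact ⟨1, 0, by simp, by simp [h]⟩
    · exact ⟨-(l ⬝ᵥ u k), l ⬝ᵥ u i, Or.inr h, by ring⟩
  have hki := hik.symm
  have hx : ∀ y, y = c • u i + d • u k → y ⬝ᵥ y = c ^ 2 + d ^ 2 := by
    rintro y rfl
    simp [horth, hik, hki]; ring
  have hq : (c • u i + d • u k) ⬝ᵥ (H *ᵥ (c • u i + d • u k)) =
      c ^ 2 * hH.eigenvalues i + d ^ 2 * hH.eigenvalues k := by
    simp [mulVec_add, mulVec_smul, hmul, horth, hik, hki]; ring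
  have := hneg (c • u i + d • u k) (by
    intro h0
    have := hx _ rfl
    rw [h0] at this
    simp at this
    rcases hcd with h | h <;> have := sq_pos_of_ne_zero h <;> nlinarith [sq_nonneg c, sq_nonneg d])
    (by simpa using hl)
  rw [hq] at this
  nlinarith [mul_nonneg (sq_nonneg c) hi, mul_nonneg (sq_nonneg d) hk.le]

open Matrix in
/-- Writing `P = Cᵀ * C`, the trace is the squared Frobenius norm of `C * N * Cᵀ`. -/
theorem trace_sq_pos {W : Type*} [Fintype W] [DecidableEq W] (P N : Matrix W W ℝ)
    (hP : P.PosDef) (hN : Nᵀ = N) (hN0 : N ≠ 0) : 0 < (P * N * (P * N)).trace := by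
  open scoped MatrixOrder in
  obtain ⟨C, hC⟩ := CStarAlgebra.nonneg_iff_eq_star_mul_self.1 hP.posSemidef.nonneg
  rw [star_eq_conjTranspose, conjTranspose_eq_transpose_of_trivial] at hC
  have hdet : IsUnit C.det := by
    have := hP.det_pos
    rw [hC, det_mul, det_transpose] at this
    exact isUnit_iff_ne_zero.2 fun h => by simp [h] at this
  set S := C * N * Cᵀ with hS
  have hSt : Sᴴ = S := by
    rw [conjTranspose_eq_transpose_of_trivial, hS]
    simp [hN, Matrix.mul_assoc]
  have htr : (P * N * (P * N)).trace = (Sᴴ * S).trace := by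
    rw [hSt, hC, hS]
    calc _ = (Cᵀ * (C * N * Cᵀ * C * N)).trace := by simp only [Matrix.mul_assoc]
      _ = _ := by rw [trace_mul_comm]; simp only [Matrix.mul_assoc]
  rw [htr]
  refine lt_of_le_of_ne (posSemidef_conjTranspose_mul_self S).trace_nonneg fun h => hN0 ?_
  have hS0 := trace_conjTranspose_mul_self_eq_zero_iff.1 h.symm
  have hCt : IsUnit Cᵀ.det := by rwa [det_transpose]
  have : C⁻¹ * S * Cᵀ⁻¹ = N := by
    rw [hS, Matrix.mul_assoc C, nonsing_inv_mul_cancel_left _ _ hdet,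
      mul_nonsing_inv_cancel_right _ _ hCt]
  rw [← this, hS0]; simp

open Matrix in
theorem gram_symm {E W : Type*} [Fintype W] [DecidableEq W] (B : Matrix E W ℝ) {L : Matrix W W ℝ}
    (hL : L.PosDef) (i j : E) : (B * L⁻¹ * Bᵀ) j i = (B * L⁻¹ * Bᵀ) i j := by
  have hLt : (L⁻¹)ᵀ = L⁻¹ := by
    have := hL.inv.isHermitian
    rwa [IsHermitian, conjTranspose_eq_transpose_of_trivial] at this
  have : (B * L⁻¹ * Bᵀ)ᵀ = B * L⁻¹ * Bᵀ := by simp [hLt, Matrix.mul_assoc]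
  exact congrFun (congrFun this i) j

open Matrix in
/-- The signature of a matrix of the shape found in `hessian_entry`, by evaluating its form as
`c * ((trace (L⁻¹ * N)) ^ 2 - trace ((L⁻¹ * N) ^ 2))` with `N = Bᵀ * diagonal v * B`. -/
theorem signature_of_gram {E W : Type*} [Fintype E] [DecidableEq E] [Fintype W] [DecidableEq W]
    (hW : 2 ≤ Fintype.card W) (B : Matrix E W ℝ) (a : E → ℝ)
    (hL : (Bᵀ * diagonal a * B).PosDef)
    (hinj : ∀ v : E → ℝ, Bᵀ * diagonal v * B = 0 → v = 0) (c : ℝ) (hc : 0 < c)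
    (K : Matrix E E ℝ) (hK : K = B * (Bᵀ * diagonal a * B)⁻¹ * Bᵀ)
    (H : Matrix E E ℝ) (hHK : ∀ i j, H i j = c * (K i i * K j j - K i j ^ 2)) :
    ∃ hH : H.IsHermitian,
      ∃ k, 0 < hH.eigenvalues k ∧ ∀ i, i ≠ k → hH.eigenvalues i < 0 := by
  set L := Bᵀ * diagonal a * B with hLdef
  have hKs : ∀ i j, K j i = K i j := by
    rw [hK]; exact gram_symm B hL
  have hH : H.IsHermitian := by
    ext i j
    simp only [conjTranspose_apply, hHK, star_trivial, hKs i j]; ring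
  have htr1 : ∀ v : E → ℝ, (L⁻¹ * (Bᵀ * diagonal v * B)).trace = K.diag ⬝ᵥ v := by
    intro v
    have : (L⁻¹ * (Bᵀ * diagonal v * B)).trace = (K * diagonal v).trace := by
      rw [hK, ← Matrix.mul_assoc, trace_mul_comm]; simp only [Matrix.mul_assoc]
    rw [this]
    simp [trace, mul_diagonal, dotProduct]
  have htr2 : ∀ v : E → ℝ,
      (L⁻¹ * (Bᵀ * diagonal v * B) * (L⁻¹ * (Bᵀ * diagonal v * B))).trace =
        ∑ i, ∑ j, v i * v j * K i j ^ 2 := by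
    intro v
    have : (L⁻¹ * (Bᵀ * diagonal v * B) * (L⁻¹ * (Bᵀ * diagonal v * B))).trace
        = ((K * diagonal v) * (K * diagonal v)).trace := by
      rw [hK, ← Matrix.mul_assoc, ← Matrix.mul_assoc, trace_mul_comm]; simp only [Matrix.mul_assoc]
    rw [this]
    simp only [trace, diag_apply, mul_apply (M := K * diagonal v), mul_diagonal]
    refine Finset.sum_congr rfl fun i _ => Finset.sum_congr rfl fun j _ => ?_
    rw [hKs i j]; ring
  have hform : ∀ v : E → ℝ, v ⬝ᵥ (H *ᵥ v) = c * ((K.diag ⬝ᵥ v) ^ 2 -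
      (L⁻¹ * (Bᵀ * diagonal v * B) * (L⁻¹ * (Bᵀ * diagonal v * B))).trace) := by
    intro v
    rw [htr2, sq, dotProduct, dotProduct, Finset.sum_mul_sum, ← Finset.sum_sub_distrib,
      Finset.mul_sum]
    refine Finset.sum_congr rfl fun i _ => ?_
    rw [← Finset.sum_sub_distrib, Finset.mul_sum, mulVec, dotProduct, Finset.mul_sum]
    refine Finset.sum_congr rfl fun j _ => ?_
    rw [hHK, diag_apply, diag_apply]; ring
  refine ⟨hH, signature_of_form H hH K.diag (fun v hv hlv => ?_) a ?_⟩
  · rw [hform, hlv]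
    have := trace_sq_pos L⁻¹ (Bᵀ * diagonal v * B) hL.inv (by simp [Matrix.mul_assoc])
      fun h => hv (hinj v h)
    nlinarith [mul_pos hc this]
  · rw [hform, ← htr1, ← hLdef, nonsing_inv_mul _ (isUnit_iff_ne_zero.2 hL.det_pos.ne')]
    have : (2 : ℝ) ≤ Fintype.card W := by exact_mod_cast hW
    simp only [mul_one, trace_one]
    apply mul_pos hc
    nlinarith

/-- The counts and the sign of the product for a family with one positive member and all others
negative. -/
theorem sign_count {E : Type*} [Fintype E] [DecidableEq E] (f : E → ℝ) (k : E) (hk : 0 < f k)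
    (hf : ∀ i, i ≠ k → f i < 0) :
    (Finset.univ.filter fun i => f i < 0).card = Fintype.card E - 1 ∧
      (Finset.univ.filter fun i => 0 < f i).card = 1 ∧
      0 < (-1 : ℝ) ^ (Fintype.card E - 1) * ∏ i, f i := by
  have h1 : (Finset.univ.filter fun i => f i < 0) = Finset.univ.erase k := by
    ext i
    by_cases h : i = k
    · subst h; simp [hk.le]
    · simp [h, hf i h]
  have h2 : (Finset.univ.filter fun i => 0 < f i) = {k} := by
    ext i
    by_cases h : i = k
    · subst h; simp [hk]
    · simp [h, (hf i h).le]
  have h3 : (Finset.univ.erase k).card = Fintype.card E - 1 := by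
    rw [Finset.card_erase_of_mem (Finset.mem_univ _), Finset.card_univ]
  refine ⟨by rw [h1, h3], by simp [h2], ?_⟩
  rw [← Finset.mul_prod_erase _ _ (Finset.mem_univ k), ← h3, mul_left_comm,
    ← Finset.prod_const, ← Finset.prod_mul_distrib]
  refine mul_pos hk (Finset.prod_pos fun i hi => ?_)
  have := hf i (Finset.ne_of_mem_erase hi)
  linarith

/-- for a finite connected simple graph `Γ` with `r + 1 ≥ 3` vertices and
`n ≥ 3` edges, the Hessian matrix of the Kirchhoff polynomial evaluated at any point `a` of the
open positive orthant is nonsingular, has exactly `n - 1` negative eigenvalues and exactly one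
positive eigenvalue; in particular `(-1)^(n-1) * det H > 0`. -/
theorem kirchhoff_hessian_signature
    {V : Type} [Fintype V] [DecidableEq V] (G : SimpleGraph V) [Fintype G.edgeSet]
    (hconn : G.Connected) (r n : ℕ)
    (hV : Fintype.card V = r + 1) (hr : 3 ≤ r + 1)
    (hE : Fintype.card G.edgeSet = n) (hn : 3 ≤ n)
    (a : G.edgeSet → ℝ) (ha : ∀ e, 0 < a e)
    (H : Matrix G.edgeSet G.edgeSet ℝ)
    (hH : H = Matrix.of fun i j => eval a (pderiv i (pderiv j (kirchhoff G)))) :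
    H.det ≠ 0 ∧
    (∃ hherm : H.IsHermitian,
      (Finset.univ.filter fun i => hherm.eigenvalues i < 0).card = n - 1 ∧
      (Finset.univ.filter fun i => 0 < hherm.eigenvalues i).card = 1) ∧
    0 < (-1 : ℝ) ^ (n - 1) * H.det := by
  obtain ⟨v₀⟩ := hconn.nonempty
  have hL := posDef_lap G hconn v₀ a ha
  have hW : 2 ≤ Fintype.card {v : V // v ≠ v₀} := by
    simp [Fintype.card_subtype_compl, hV]; omega
  have hsym := gram_symm (redInc G v₀ ℝ) hL
  obtain ⟨hherm, k, hk, hneg⟩ := signature_of_gram hW (redInc G v₀ ℝ) a hL (lap_injective G v₀) _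
    hL.det_pos _ rfl H fun i j => by
      rw [hH, Matrix.of_apply]
      exact hessian_entry G v₀ a _ rfl hsym (isUnit_iff_ne_zero.2 hL.det_pos.ne') i j
  obtain ⟨h1, h2, h3⟩ := sign_count hherm.eigenvalues k hk hneg
  have hdet : H.det = ∏ i, hherm.eigenvalues i := by
    simpa using hherm.det_eq_prod_eigenvalues
  rw [← hdet] at h3
  subst hE
  exact ⟨fun h0 => by simp [h0] at h3, ⟨hherm, h1, h2⟩, h3⟩
end

section
/- Let F ∈ ℝ[x_1,…,x_N] be a multi-affine homogeneous polynomial of degree r ≥ 3 (multi-affine means of degree at most one in each variable), fix an index k ∈ {1,…,N}, and set F_0 = F|_{x_k = 0} and F_k = ∂F/∂x_k, both polynomials in the variables x_i with i ≠ k. Let a ∈ ℝ^N_{≥0} be a point with F_0(a) > 0 and F_k(a) > 0. Then for every real s ≥ (r−1)/r (respectively s > (r−1)/r), the N×N matrix (−F·H_F + s·(∇F)ᵀ(∇F)) evaluated at a is positive semidefinite (respectively positive definite) if and only if the (N−1)×(N−1) matrix, indexed by i, j ≠ k, given by s·x_k·F_0·F_k·(−F_k·H_{F_k} + ((2s−1)/s)·(∇F_k)ᵀ(∇F_k))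 + s·F_k²·(−F_0·H_{F_0} + s·(∇F_0)ᵀ(∇F_0)) − (s·F_k·∇F_0 − F_0·∇F_k)ᵀ(s·F_k·∇F_0 − F_0·∇F_k), evaluated at a, is positive semidefinite (respectively positive definite). -/
open MvPolynomial

/-!
Since `F` is affine in `x_k`, it splits as `F = F₀ + x_k F_k` with `F₀` and `F_k` independent of
`x_k`. Hence the diagonal entry at `k` of `M = -F·H_F + s·(∇F)ᵀ(∇F)` is `s·F_k² > 0`, and `M` is
positive (semi)definite iff its Schur complement with respect to this entry is. A direct
computation shows that `F₀·(M_kk M_ij - M_ik M_kj) = F·T_ij`, where `T` is the reduced matrix, and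
both `F₀(a)` and `F(a) = F₀(a) + a_k F_k(a)` are positive. The Schur complement step is carried out
on quadratic forms, by completing the square (`mul_quadForm_eq`).
-/

section Schur

open Matrix

variable {n : Type*} [Fintype n] [DecidableEq n]

/-- Completing the square in the variable `k`; the matrix `c • T` is `M k k` times the Schur
complement of `M` with respect to its diagonal entry at `k`. -/
lemma mul_quadForm_eq (M : Matrix n n ℝ) (hM : ∀ i j, M i j = M j i) (k : n)
    (T : Matrix {i // i ≠ k} {i // i ≠ k} ℝ) (c : ℝ)
    (hT : ∀ i j : {i // i ≠ k}, M k k * M i j - M i k * M k j = c * T i j) (v : n → ℝ) :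
    M k k * (star v ⬝ᵥ (M *ᵥ v)) =
      (M k k * v k + ∑ i : {i // i ≠ k}, M k i * v i) ^ 2 +
        c * (star (fun i : {i // i ≠ k} => v i) ⬝ᵥ (T *ᵥ fun i => v i)) := by
  have hcT : c * (star (fun i : {i // i ≠ k} => v i) ⬝ᵥ (T *ᵥ fun i => v i)) =
      M k k * (∑ i : {i // i ≠ k}, v i * ∑ j : {i // i ≠ k}, M i j * v j) -
        (∑ i : {i // i ≠ k}, M k i * v i) ^ 2 := by
    rw [sq, Finset.sum_mul_sum]
    simp only [dotProduct, mulVec, Finset.mul_sum, star_trivial, ← Finset.sum_sub_distrib]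
    refine Finset.sum_congr rfl fun i _ => Finset.sum_congr rfl fun j _ => ?_
    have := hT i j
    rw [hM i k] at this
    linear_combination (-(v i * v j)) * this
  have hcol : ∑ i : {i // i ≠ k}, v i * (M i k * v k) =
      v k * ∑ i : {i // i ≠ k}, M k i * v i := by
    rw [Finset.mul_sum]
    refine Finset.sum_congr rfl fun i _ => ?_
    rw [hM i k]
    ring
  rw [hcT]
  simp only [dotProduct, mulVec, star_trivial]
  simp only [Fintype.sum_eq_add_sum_subtype_ne _ k, mul_add, Finset.sum_add_distrib, hcol]
  ring

/-- A vector on the indices `≠ k` extends to `v` so that the square in `mul_quadForm_eq`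
vanishes. -/
lemma exists_extension (M : Matrix n n ℝ) (k : n) (hk : 0 < M k k) (w : {i // i ≠ k} → ℝ) :
    ∃ v : n → ℝ, (fun i : {i // i ≠ k} => v i) = w ∧
      M k k * v k + ∑ i : {i // i ≠ k}, M k i * v i = 0 := by
  refine ⟨fun i => if h : i ≠ k then w ⟨i, h⟩
    else -(∑ j : {i // i ≠ k}, M k j * w j) / M k k, ?_, ?_⟩
  · funext i
    simp [i.2]
  · have : ∀ i : {i // i ≠ k}, (if h : (i : n) ≠ k then w ⟨i, h⟩
        else -(∑ j : {i // i ≠ k}, M k j * w j) / M k k) = w i := fun i => dif_pos i.2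
    simp only [this]
    rw [dif_neg (by simp)]
    field_simp
    ring

lemma isHermitian_of_schur {M : Matrix n n ℝ} (hM : ∀ i j, M i j = M j i) {k : n}
    {T : Matrix {i // i ≠ k} {i // i ≠ k} ℝ} {c : ℝ} (hc : 0 < c)
    (hT : ∀ i j : {i // i ≠ k}, M k k * M i j - M i k * M k j = c * T i j) :
    M.IsHermitian ∧ T.IsHermitian := by
  refine ⟨Matrix.IsHermitian.ext fun i j => by simp [hM i j],
    Matrix.IsHermitian.ext fun i j => ?_⟩
  have h1 := hT i j
  have h2 := hT j i
  rw [hM j i, hM j k, hM k i] at h2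
  rw [star_trivial]
  apply mul_left_cancel₀ hc.ne'
  linarith

lemma posSemidef_iff_of_schur (M : Matrix n n ℝ) (hM : ∀ i j, M i j = M j i) (k : n)
    (hk : 0 < M k k) (T : Matrix {i // i ≠ k} {i // i ≠ k} ℝ) (c : ℝ) (hc : 0 < c)
    (hT : ∀ i j : {i // i ≠ k}, M k k * M i j - M i k * M k j = c * T i j) :
    M.PosSemidef ↔ T.PosSemidef := by
  have hQ := mul_quadForm_eq M hM k T c hT
  obtain ⟨hMh, hTh⟩ := isHermitian_of_schur hM hc hT
  constructor
  · refine fun h => .of_dotProduct_mulVec_nonneg hTh fun w => ?_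
    obtain ⟨v, rfl, hv⟩ := exists_extension M k hk w
    have h1 := mul_nonneg hk.le (h.dotProduct_mulVec_nonneg v)
    rw [hQ, hv] at h1
    exact nonneg_of_mul_nonneg_right (by simpa using h1) hc
  · refine fun h => .of_dotProduct_mulVec_nonneg hMh fun v => ?_
    have h1 := mul_nonneg hc.le (h.dotProduct_mulVec_nonneg fun i => v i)
    refine nonneg_of_mul_nonneg_right ?_ hk
    rw [hQ]
    positivity

lemma posDef_iff_of_schur (M : Matrix n n ℝ) (hM : ∀ i j, M i j = M j i) (k : n)
    (hk : 0 < M k k) (T : Matrix {i // i ≠ k} {i // i ≠ k} ℝ) (c : ℝ) (hc : 0 < c)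
    (hT : ∀ i j : {i // i ≠ k}, M k k * M i j - M i k * M k j = c * T i j) :
    M.PosDef ↔ T.PosDef := by
  have hQ := mul_quadForm_eq M hM k T c hT
  obtain ⟨hMh, hTh⟩ := isHermitian_of_schur hM hc hT
  constructor
  · refine fun h => .of_dotProduct_mulVec_pos hTh fun w hw => ?_
    obtain ⟨v, rfl, hv⟩ := exists_extension M k hk w
    have hv0 : v ≠ 0 := by
      rintro rfl
      exact hw rfl
    have h1 := mul_pos hk (h.dotProduct_mulVec_pos hv0)
    rw [hQ, hv] at h1
    exact pos_of_mul_pos_right (by simpa using h1) hc.le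
  · refine fun h => .of_dotProduct_mulVec_pos hMh fun v hv => ?_
    refine pos_of_mul_pos_right ?_ hk.le
    rw [hQ]
    by_cases hw : (fun i : {i // i ≠ k} => v i) = 0
    · -- Only the coordinate `v k` survives, and it is nonzero.
      have hvi : ∀ i : {i // i ≠ k}, v i = 0 := fun i => congrFun hw i
      have hvk : v k ≠ 0 := by
        intro h0
        apply hv
        funext i
        by_cases hi : i = k
        · rw [hi, h0]
          rfl
        · exact hvi ⟨i, hi⟩
      rw [hw]
      simp only [hvi, mul_zero, Finset.sum_const_zero, add_zero, Matrix.mulVec_zero,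
        dotProduct_zero]
      positivity
    · have h1 := mul_pos hc (h.dotProduct_mulVec_pos hw)
      positivity

end Schur

section Affine

variable {σ : Type*} [DecidableEq σ]

lemma pderiv_pderiv_comm (i j : σ) (p : MvPolynomial σ ℝ) :
    pderiv i (pderiv j p) = pderiv j (pderiv i p) := by
  by_cases hij : i = j
  · rw [hij]
  · ext m
    simp only [coeff_pderiv, Finsupp.add_apply, Finsupp.single_apply, if_neg hij,
      if_neg (Ne.symm hij), add_right_comm m (Finsupp.single i 1)]
    push_cast
    ring

lemma aeval_kill_monomial (k : σ) (m : σ →₀ ℕ) (c : ℝ) :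
    aeval (fun i : σ => if i = k then 0 else X i) (monomial m c) =
      if m k = 0 then monomial m c else (0 : MvPolynomial σ ℝ) := by
  rw [aeval_monomial]
  split_ifs with h
  · rw [monomial_eq, algebraMap_eq]
    congr 1
    refine Finsupp.prod_congr fun i hi => ?_
    rw [if_neg]
    rintro rfl
    exact (Finsupp.mem_support_iff.mp hi) h
  · rw [Finsupp.prod, Finset.prod_eq_zero (Finsupp.mem_support_iff.mpr h), mul_zero]
    simp [h]

/-- A polynomial affine in `x_k` is `F₀ + x_k F_k`, with both parts independent of `x_k`. -/
lemma affine_decomposition (k : σ) (F : MvPolynomial σ ℝ) (hF : F.degreeOf k ≤ 1) :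
    F = aeval (fun i : σ => if i = k then 0 else X i) F + X k * pderiv k F ∧
      pderiv k (aeval (fun i : σ => if i = k then 0 else X i) F : MvPolynomial σ ℝ) = 0 ∧
      pderiv k (pderiv k F) = 0 := by
  rw [degreeOf_le_iff] at hF
  have hsum := F.support_sum_monomial_coeff
  refine ⟨?_, ?_, ?_⟩
  · conv_lhs => rw [← hsum]
    conv_rhs => rw [← hsum]
    rw [map_sum, map_sum, Finset.mul_sum, ← Finset.sum_add_distrib]
    refine Finset.sum_congr rfl fun m hm => ?_
    rw [aeval_kill_monomial, X_mul_pderiv_monomial]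
    have := hF m hm
    interval_cases h : m k <;> simp
  · rw [← hsum, map_sum, map_sum]
    refine Finset.sum_eq_zero fun m hm => ?_
    rw [aeval_kill_monomial]
    split_ifs with h
    · simp [pderiv_monomial, h]
    · simp
  · rw [← hsum, map_sum, map_sum]
    refine Finset.sum_eq_zero fun m hm => ?_
    have := hF m hm
    simp only [pderiv_monomial, Finsupp.tsub_apply, Finsupp.single_eq_same]
    interval_cases h : m k <;> simp

end Affine

/-- let `F` be a multi-affine homogeneous polynomial of degree `r ≥ 3` in `N`
variables, `k` an index, `F₀ = F|_{x_k = 0}`, `F_k = ∂F/∂x_k`, and `a ∈ ℝ^N_{≥0}` with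
`F₀(a) > 0` and `F_k(a) > 0`.  Then for every `s ≥ (r-1)/r` (resp. `s > (r-1)/r`) the `N × N`
matrix `(-F·H_F + s·(∇F)ᵀ(∇F))(a)` is positive semidefinite (resp. definite) iff the
`(N-1) × (N-1)` matrix (indexed by `i, j ≠ k`)
`s·x_k·F₀·F_k·(-F_k·H_{F_k} + ((2s-1)/s)·(∇F_k)ᵀ(∇F_k))
  + s·F_k²·(-F₀·H_{F₀} + s·(∇F₀)ᵀ(∇F₀))
  - (s·F_k·∇F₀ - F₀·∇F_k)ᵀ(s·F_k·∇F₀ - F₀·∇F_k)` evaluated at `a` is. -/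
theorem posdef_iff_reduced_matrix_posdef (N r : ℕ) (hr : 3 ≤ r)
    (F : MvPolynomial (Fin N) ℝ) (hhom : F.IsHomogeneous r)
    (haff : ∀ i, F.degreeOf i ≤ 1)
    (k : Fin N) (a : Fin N → ℝ) (ha : ∀ i, 0 ≤ a i)
    (F0 : MvPolynomial (Fin N) ℝ)
    (hF0 : F0 = aeval (fun i : Fin N => if i = k then 0 else X i) F)
    (Fk : MvPolynomial (Fin N) ℝ) (hFk : Fk = pderiv k F)
    (h0 : 0 < eval a F0) (hk : 0 < eval a Fk) :
    (∀ s : ℝ, ((r : ℝ) - 1) / (r : ℝ) ≤ s →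
      ((Matrix.of fun i j : Fin N =>
          -(eval a F) * eval a (pderiv i (pderiv j F))
            + s * (eval a (pderiv i F) * eval a (pderiv j F))).PosSemidef ↔
        (Matrix.of fun i j : {i : Fin N // i ≠ k} =>
          s * a k * eval a F0 * eval a Fk *
              (-(eval a Fk) * eval a (pderiv i.1 (pderiv j.1 Fk))
                + ((2 * s - 1) / s) * (eval a (pderiv i.1 Fk) * eval a (pderiv j.1 Fk)))
            + s * (eval a Fk) ^ 2 *
              (-(eval a F0) * eval a (pderiv i.1 (pderiv j.1 F0))
                + s * (eval a (pderiv i.1 F0) * eval a (pderiv j.1 F0)))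
            - (s * eval a Fk * eval a (pderiv i.1 F0) - eval a F0 * eval a (pderiv i.1 Fk))
              * (s * eval a Fk * eval a (pderiv j.1 F0)
                  - eval a F0 * eval a (pderiv j.1 Fk))).PosSemidef)) ∧
    (∀ s : ℝ, ((r : ℝ) - 1) / (r : ℝ) < s →
      ((Matrix.of fun i j : Fin N =>
          -(eval a F) * eval a (pderiv i (pderiv j F))
            + s * (eval a (pderiv i F) * eval a (pderiv j F))).PosDef ↔
        (Matrix.of fun i j : {i : Fin N // i ≠ k} =>
          s * a k * eval a F0 * eval a Fk *
              (-(eval a Fk) * eval a (pderiv i.1 (pderiv j.1 Fk))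
                + ((2 * s - 1) / s) * (eval a (pderiv i.1 Fk) * eval a (pderiv j.1 Fk)))
            + s * (eval a Fk) ^ 2 *
              (-(eval a F0) * eval a (pderiv i.1 (pderiv j.1 F0))
                + s * (eval a (pderiv i.1 F0) * eval a (pderiv j.1 F0)))
            - (s * eval a Fk * eval a (pderiv i.1 F0) - eval a F0 * eval a (pderiv i.1 Fk))
              * (s * eval a Fk * eval a (pderiv j.1 F0)
                  - eval a F0 * eval a (pderiv j.1 Fk))).PosDef)) := by
  classical
  obtain ⟨hdec, hk0, hkk⟩ := affine_decomposition k F (haff k)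
  rw [← hF0, ← hFk] at hdec
  rw [← hF0] at hk0
  rw [← hFk] at hkk
  have hak := ha k
  have heF : eval a F = eval a F0 + a k * eval a Fk := by
    conv_lhs => rw [hdec]
    simp
  have hFpos : 0 < eval a F := by
    rw [heF]
    positivity
  have hd1 : ∀ i : {i : Fin N // i ≠ k},
      pderiv i.1 F = pderiv i.1 F0 + X k * pderiv i.1 Fk := by
    intro i
    conv_lhs => rw [hdec]
    simp [pderiv_mul, pderiv_X_of_ne i.2.symm]
  have he1 : ∀ i : {i : Fin N // i ≠ k},
      eval a (pderiv i.1 F) = eval a (pderiv i.1 F0) + a k * eval a (pderiv i.1 Fk) := by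
    intro i
    rw [hd1]
    simp
  have he2 : ∀ i j : {i : Fin N // i ≠ k}, eval a (pderiv i.1 (pderiv j.1 F)) =
      eval a (pderiv i.1 (pderiv j.1 F0)) + a k * eval a (pderiv i.1 (pderiv j.1 Fk)) := by
    intro i j
    rw [hd1]
    simp [pderiv_mul, pderiv_X_of_ne i.2.symm]
  have hs0 : ∀ s : ℝ, ((r : ℝ) - 1) / (r : ℝ) ≤ s → 0 < s := by
    intro s hs
    have hr' : (3 : ℝ) ≤ r := by exact_mod_cast hr
    exact lt_of_lt_of_le (div_pos (by linarith) (by linarith)) hs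
  constructor
  all_goals
    intro s hs
    have hspos : 0 < s := hs0 s (by first | exact hs | exact hs.le)
    first
      | apply posSemidef_iff_of_schur (k := k) (c := eval a F / eval a F0)
      | apply posDef_iff_of_schur (k := k) (c := eval a F / eval a F0)
    · intro i j
      simp only [Matrix.of_apply]
      rw [pderiv_pderiv_comm]
      ring
    · simp only [Matrix.of_apply, ← hFk, hkk, map_zero]
      rw [mul_zero, zero_add]
      positivity
    · positivity
    · intro i j
      simp only [Matrix.of_apply]
      rw [pderiv_pderiv_comm k j.1 F, he2, he1, he1, ← hFk, hkk, map_zero, heF]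
      field_simp
      ring
end
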